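/- Let 0 < δ < 1 and 0 < p ≤ q < ∞. Suppose the fractional (δ,q,p)-Hardy inequality holds in a proper open set G in ℝⁿ with constant C₁ > 0. Then there is a constant N = N(C₁, n, δ, q, p) > 0 such that, for any Whitney decomposition 𝒲(G) of G, the inequality ∑_{Q ∈ 𝒲(G)} cap_{δ,p}(K ∩ Q, G)^{q/p} ≤ N^{q/p} · cap_{δ,p}(K, G)^{q/p} holds for every compact set K in G. -/

import Mathlib

open MeasureTheory Metric Set
open scoped ENNReal NNReal BigOperators

noncomputable section

/-- Euclidean `n`-space. -/
abbrev Eucl (n : ℕ) : Type := EuclideanSpace ℝ (Fin n)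

/-- `D` is a `c`-John domain (bounded or unbounded): an open connected set such that each
pair of points can be joined by a rectifiable curve, parametrized by arc length
(formalized as a `1`-Lipschitz parametrization on `[0, ℓ]`), along which
`dist(γ t, ∂D) ≥ min{t, ℓ - t}/c`. -/
def IsJohnDomain (n : ℕ) (c : ℝ) (D : Set (Eucl n)) : Prop :=
  IsOpen D ∧ IsConnected D ∧
    ∀ x₁ ∈ D, ∀ x₂ ∈ D, ∃ ℓ : ℝ, 0 ≤ ℓ ∧ ∃ γ : ℝ → Eucl n,
      γ 0 = x₁ ∧ γ ℓ = x₂ ∧ (∀ t ∈ Icc (0:ℝ) ℓ, γ t ∈ D) ∧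
      LipschitzOnWith 1 γ (Icc 0 ℓ) ∧
      ∀ t ∈ Icc (0:ℝ) ℓ, min t (ℓ - t) / c ≤ infDist (γ t) (frontier D)

/-- The ball `B(x, τ·dist(x, ∂G))`; by convention, if `∂G = ∅` (i.e. `G = ℝⁿ`)
it is all of `ℝⁿ`. -/
def tauBall (n : ℕ) (τ : ℝ) (G : Set (Eucl n)) (x : Eucl n) : Set (Eucl n) :=
  {y : Eucl n | edist x y < ENNReal.ofReal τ * EMetric.infEdist x (frontier G)}

/-- The fractional kernel `|u x - u y|^p / |x - y|^(n + δp)` as an extended real. -/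
def fracKernel (n : ℕ) (δ p : ℝ) (u : Eucl n → ℝ) (x y : Eucl n) : ℝ≥0∞ :=
  ENNReal.ofReal (|u x - u y| ^ p / dist x y ^ ((n : ℝ) + δ * p))

/-- The `p`-th power of the seminorm `|u|_{W^{δ,p}_τ(G)}`. -/
def fracEnergyTau (n : ℕ) (δ τ p : ℝ) (G : Set (Eucl n)) (u : Eucl n → ℝ) : ℝ≥0∞ :=
  ∫⁻ x in G, ∫⁻ y in tauBall n τ G x, fracKernel n δ p u x y ∂volume ∂volume

/-- The `p`-th power of the seminorm `|u|_{W^{δ,p}(G)}`. -/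
def fracEnergy (n : ℕ) (δ p : ℝ) (G : Set (Eucl n)) (u : Eucl n → ℝ) : ℝ≥0∞ :=
  ∫⁻ x in G, ∫⁻ y in G, fracKernel n δ p u x y ∂volume ∂volume

/-- The fractional `(δ,p)`-capacity of a compact set `K ⊆ G`:
`inf |u|_{W^{δ,p}(G)}^p` over `u ∈ C₀(G)` with `u ≥ 1` on `K`. -/
def fracCap (n : ℕ) (δ p : ℝ) (K G : Set (Eucl n)) : ℝ≥0∞ :=
  ⨅ (u : Eucl n → ℝ) (_ : Continuous u) (_ : HasCompactSupport u) (_ : tsupport u ⊆ G)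
    (_ : ∀ x ∈ K, 1 ≤ u x), fracEnergy n δ p G u

/-- The fractional `(δ,q,p)`-Hardy inequality holds in `G` with constant `C`. -/
def HasFracHardy (n : ℕ) (δ p q C : ℝ) (G : Set (Eucl n)) : Prop :=
  ∀ u : Eucl n → ℝ, Continuous u → HasCompactSupport u → tsupport u ⊆ G →
    (∫⁻ x in G, ENNReal.ofReal
        (|u x| ^ q / infDist x (frontier G) ^ (q * (δ + n * (1/q - 1/p)))) ∂volume)
      ≤ ENNReal.ofReal C * fracEnergy n δ p G u ^ (q / p)

/-- The closed axis-parallel cube with center `z` and half side length `r`. -/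
def cube (n : ℕ) (z : Eucl n) (r : ℝ) : Set (Eucl n) :=
  {x : Eucl n | ∀ i, |x i - z i| ≤ r}

/-- The quantity `|Q|^(-1-δ/n) ∫_Q |u - u_Q|` for the cube `Q = cube n z r`. -/
def aTerm (n : ℕ) (δ : ℝ) (u : Eucl n → ℝ) (z : Eucl n) (r : ℝ) : ℝ :=
  ((volume (cube n z r)).toReal) ^ (-(1:ℝ) - δ / n) *
    ∫ x in cube n z r, |u x - ⨍ y in cube n z r, u y ∂volume| ∂volume

/-- The seminorm `|u|_{A^{δ,p}_κ(G)}`: the supremum, over families `𝒬` of pairwise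
disjoint cubes `Q` (given by center-halfside pairs) with `κQ ⊆ G`, of the `L^p(G)`
norm of `∑_{Q ∈ 𝒬} (|Q|^(-1-δ/n) ∫_Q |u - u_Q|) χ_Q`. -/
def ASeminorm (n : ℕ) (κ δ p : ℝ) (G : Set (Eucl n)) (u : Eucl n → ℝ) : ℝ≥0∞ :=
  ⨆ (𝒬 : Set (Eucl n × ℝ)) (_ : ∀ c ∈ 𝒬, 0 < c.2 ∧ cube n c.1 (κ * c.2) ⊆ G)
    (_ : ∀ c ∈ 𝒬, ∀ c' ∈ 𝒬, c ≠ c' → cube n c.1 c.2 ∩ cube n c'.1 c'.2 = ∅),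
    (∫⁻ x in G,
        (∑' c : 𝒬, (cube n (c : Eucl n × ℝ).1 (c : Eucl n × ℝ).2).indicator
          (fun _ => ENNReal.ofReal (aTerm n δ u (c : Eucl n × ℝ).1 (c : Eucl n × ℝ).2)) x) ^ p
      ∂volume) ^ (1 / p)

/-- `Q` is a closed dyadic cube in `ℝⁿ`. -/
def IsDyadicCube (n : ℕ) (Q : Set (Eucl n)) : Prop :=
  ∃ (k : ℤ) (z : Fin n → ℤ),
    Q = {x : Eucl n | ∀ i, (z i : ℝ) * (2:ℝ) ^ k ≤ x i ∧ x i ≤ ((z i : ℝ) + 1) * (2:ℝ) ^ k}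

/-- `W` is a Whitney decomposition of the proper open set `G`: a countable family of
closed dyadic cubes with pairwise disjoint interiors whose union is `G`, with
`diam Q ≤ dist(Q, ∂G) ≤ 4 diam Q` for each cube `Q ∈ W`. -/
def IsWhitneyDecomposition (n : ℕ) (G : Set (Eucl n)) (W : Set (Set (Eucl n))) : Prop :=
  W.Countable ∧ (∀ Q ∈ W, IsDyadicCube n Q) ∧ ⋃₀ W = G ∧
    (W.Pairwise fun Q R => interior Q ∩ interior R = ∅) ∧
    ∀ Q ∈ W, (∀ x ∈ Q, Metric.diam Q ≤ infDist x (frontier G)) ∧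
      ∃ x ∈ Q, infDist x (frontier G) ≤ 4 * Metric.diam Q

/-- `lam` is an upper Assouad-type covering exponent for `E`: there is `C > 0` such
that for every `x ∈ E` and all `0 < r < R < 2 diam E`, the set `E ∩ B(x,R)` can be
covered by at most `C (R/r)^lam` balls centered in `E` of radius `r`. -/
def UpperAssouadBound (n : ℕ) (E : Set (Eucl n)) (lam : ℝ) : Prop :=
  ∃ C : ℝ, 0 < C ∧ ∀ x ∈ E, ∀ r R : ℝ, 0 < r → r < R →
    ENNReal.ofReal R < 2 * EMetric.diam E →
    ∃ F : Finset (Eucl n), ↑F ⊆ E ∧ (F.card : ℝ) ≤ C * (R / r) ^ lam ∧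
      E ∩ ball x R ⊆ ⋃ y ∈ F, ball y r

/-- The upper Assouad dimension of `E`. -/
def upperAssouadDim (n : ℕ) (E : Set (Eucl n)) : ℝ :=
  sInf {lam : ℝ | 0 ≤ lam ∧ UpperAssouadBound n E lam}

/-- `lam` is a lower Assouad-type exponent for `E`: there is `C > 0` such that for
every `x ∈ E` and all `0 < r < R < 2 diam E`, at least `C (R/r)^lam` balls centered
in `E` of radius `r` are needed to cover `E ∩ B(x,R)`. -/
def LowerAssouadBound (n : ℕ) (E : Set (Eucl n)) (lam : ℝ) : Prop :=
  ∃ C : ℝ, 0 < C ∧ ∀ x ∈ E, ∀ r R : ℝ, 0 < r → r < R →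
    ENNReal.ofReal R < 2 * EMetric.diam E →
    ∀ F : Finset (Eucl n), ↑F ⊆ E → (E ∩ ball x R ⊆ ⋃ y ∈ F, ball y r) →
      C * (R / r) ^ lam ≤ (F.card : ℝ)

/-- The lower Assouad dimension of `E`. -/
def lowerAssouadDim (n : ℕ) (E : Set (Eucl n)) : ℝ :=
  sSup {lam : ℝ | 0 ≤ lam ∧ LowerAssouadBound n E lam}

end

namespace FH

lemma kernel_int (n : ℕ) (hn : 0 < n) (δ p : ℝ) (hδ : δ ∈ Ioo (0:ℝ) 1) (hp : 0 < p) :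
    Integrable (fun z : Eucl n => (min 1 ‖z‖) ^ p / ‖z‖ ^ ((n:ℝ) + δ * p)) volume := by
  have : Nonempty (Fin n) := ⟨⟨0, hn⟩⟩
  have hδp : 0 < δ * p := mul_pos hδ.1 hp
  have hδp' : δ * p < p := by nlinarith [hδ.2]
  rw [integrable_fun_norm_addHaar (E := Eucl n) volume
    (f := fun t : ℝ => (min 1 t) ^ p / t ^ ((n:ℝ) + δ * p))]
  simp only [finrank_euclideanSpace, Fintype.card_fin, smul_eq_mul]
  have hpow : ∀ t : ℝ, 0 < t → t ^ (n - 1) = t ^ ((n:ℝ) - 1) := by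
    intro t ht
    rw [← Real.rpow_natCast, Nat.cast_sub hn, Nat.cast_one]
  have hU : Ioi (0:ℝ) = Ioc 0 1 ∪ Ioi 1 := (Ioc_union_Ioi_eq_Ioi zero_le_one).symm
  rw [hU]
  refine IntegrableOn.union ?_ ?_
  · have h : IntegrableOn (fun t : ℝ => t ^ (p - 1 - δ * p)) (Ioc 0 1) := by
      have := intervalIntegral.intervalIntegrable_rpow' (a := 0) (b := 1) (r := p - 1 - δ * p)
        (by linarith)
      rwa [intervalIntegrable_iff_integrableOn_Ioc_of_le zero_le_one] at this
    refine h.congr_fun ?_ measurableSet_Ioc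
    intro t ht
    simp only
    rw [min_eq_right ht.2, hpow t ht.1, ← Real.rpow_sub ht.1, ← Real.rpow_add ht.1]
    congr 1; ring
  · have h : IntegrableOn (fun t : ℝ => t ^ (- 1 - δ * p)) (Ioi 1) :=
      integrableOn_Ioi_rpow_of_lt (by linarith) zero_lt_one
    refine h.congr_fun ?_ measurableSet_Ioi
    intro t ht
    have ht' : (1:ℝ) < t := ht
    have h0 : 0 < t := by linarith
    simp only
    rw [min_eq_left ht'.le, hpow t h0, Real.one_rpow, one_div, ← Real.rpow_neg h0.le,
      ← Real.rpow_add h0]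
    congr 1; ring

lemma kernel_const (n : ℕ) (hn : 0 < n) (δ p : ℝ) (hδ : δ ∈ Ioo (0:ℝ) 1) (hp : 0 < p) :
    ∃ C0 : ℝ, 0 < C0 ∧ ∀ r : ℝ, 0 < r → ∀ x : Eucl n,
      ∫⁻ y : Eucl n, ENNReal.ofReal ((min 1 (dist x y / r)) ^ p / dist x y ^ ((n:ℝ) + δ * p))
        ≤ ENNReal.ofReal (C0 * r ^ (-(δ * p))) := by
  have hI := kernel_int n hn δ p hδ hp
  set g : Eucl n → ℝ := fun z => (min 1 ‖z‖) ^ p / ‖z‖ ^ ((n:ℝ) + δ * p) with hg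
  have hg0 : ∀ z, 0 ≤ g z := fun z => by simp only [hg]; positivity
  have hint0 : 0 ≤ ∫ z, g z := integral_nonneg hg0
  refine ⟨(∫ z, g z) + 1, by linarith, ?_⟩
  intro r hr x
  have h1 : ∀ y, ENNReal.ofReal ((min 1 (dist x y / r)) ^ p / dist x y ^ ((n:ℝ) + δ * p))
      = (fun z => ENNReal.ofReal (r ^ (-((n:ℝ) + δ * p))) * ENNReal.ofReal (g (r⁻¹ • z))) (x - y) := by
    intro y
    simp only [hg]
    rw [← ENNReal.ofReal_mul (by positivity), norm_smul, Real.norm_of_nonneg (by positivity),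
      dist_eq_norm, Real.mul_rpow (by positivity) (by positivity), Real.inv_rpow hr.le,
      Real.rpow_neg hr.le]
    congr 1
    have : r ^ ((n:ℝ) + δ * p) ≠ 0 := by positivity
    rw [div_eq_inv_mul ‖x - y‖ r]
    field_simp
  simp_rw [h1]
  rw [lintegral_sub_left_eq_self (fun z => ENNReal.ofReal (r ^ (-((n:ℝ) + δ * p))) * ENNReal.ofReal (g (r⁻¹ • z)))]
  have hgm : Measurable fun z => ENNReal.ofReal (g z) := by
    simp only [hg]; fun_prop
  rw [lintegral_const_mul' _ _ ENNReal.ofReal_ne_top]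
  have h2 : ∫⁻ z, ENNReal.ofReal (g (r⁻¹ • z)) = ENNReal.ofReal (r ^ n) * ∫⁻ z, ENNReal.ofReal (g z) := by
    rw [← lintegral_map (f := fun z => ENNReal.ofReal (g z)) hgm (measurable_const_smul r⁻¹),
      Measure.map_addHaar_smul _ (by positivity), lintegral_smul_measure]
    simp [abs_of_pos hr]
  rw [h2, ← ofReal_integral_eq_lintegral_ofReal hI (Filter.Eventually.of_forall hg0),
    ← ENNReal.ofReal_mul (by positivity), ← ENNReal.ofReal_mul (by positivity)]
  apply ENNReal.ofReal_le_ofReal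
  rw [neg_add, Real.rpow_add hr, Real.rpow_neg hr.le, Real.rpow_natCast]
  have : 0 < r ^ (-(δ * p)) := by positivity
  have hrn : r ^ n ≠ 0 := by positivity
  field_simp
  nlinarith

lemma cube_facts (n : ℕ) (hn : 0 < n) (Q : Set (Eucl n)) (hQ : IsDyadicCube n Q) :
    ∃ (c : Eucl n) (r : ℝ), 0 < r ∧ ball c r ⊆ Q ∧ Bornology.IsBounded Q ∧
      diam Q ≤ 2 * n * r ∧ 0 < diam Q := by
  obtain ⟨k, z, rfl⟩ := hQ
  set Q : Set (Eucl n) :=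
    {x : Eucl n | ∀ i, (z i : ℝ) * (2:ℝ) ^ k ≤ x i ∧ x i ≤ ((z i : ℝ) + 1) * (2:ℝ) ^ k} with hQ
  have hl : (0:ℝ) < 2 ^ k := by positivity
  have hn1 : (1:ℝ) ≤ n := by exact_mod_cast hn
  have hdist : ∀ x ∈ Q, ∀ y ∈ Q, dist x y ≤ n * (2:ℝ) ^ k := by
    intro x hx y hy
    rw [EuclideanSpace.dist_eq]
    apply Real.sqrt_le_iff.2 ⟨by positivity, ?_⟩
    calc ∑ i, dist (x i) (y i) ^ 2 ≤ ∑ i : Fin n, ((2:ℝ) ^ k) ^ 2 := by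
          apply Finset.sum_le_sum
          intro i _
          apply pow_le_pow_left₀ dist_nonneg
          rw [Real.dist_eq, abs_le]
          have := hx i
          have := hy i
          constructor <;> linarith
      _ = n * ((2:ℝ) ^ k) ^ 2 := by simp
      _ ≤ (n * (2:ℝ) ^ k) ^ 2 := by
          rw [mul_pow]
          apply mul_le_mul_of_nonneg_right _ (by positivity)
          nlinarith
  have hbdd : Bornology.IsBounded Q := Metric.isBounded_iff.2 ⟨_, fun x hx y hy => hdist x hx y hy⟩
  set c : Eucl n := WithLp.toLp 2 (fun i => ((z i : ℝ) + 1/2) * 2 ^ k) with hc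
  have hsub : ball c ((2:ℝ) ^ k / 2) ⊆ Q := by
    intro x hx i
    have h1 : dist (x i) (c i) ≤ dist x c := by
      have := PiLp.norm_apply_le (x - c) i
      rwa [← dist_eq_norm] at this
    have h2 : |x i - c i| < 2 ^ k / 2 := by
      rw [← Real.dist_eq]; exact h1.trans_lt hx
    have h3 : c i = ((z i : ℝ) + 1/2) * 2 ^ k := rfl
    rw [h3, abs_lt] at h2
    constructor <;> linarith [h2.1, h2.2]
  refine ⟨c, 2 ^ k / 2, by positivity, hsub, hbdd, ?_, ?_⟩
  · apply diam_le_of_forall_dist_le (by positivity)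
    intro x hx y hy
    have := hdist x hx y hy
    linarith
  · have hc0 : c ∈ Q := hsub (mem_ball_self (by positivity))
    have : Nonempty (Fin n) := ⟨⟨0, hn⟩⟩
    obtain ⟨v, hv⟩ := exists_norm_eq (Eucl n) (c := (2:ℝ) ^ k / 4) (by positivity)
    have hc1 : c + v ∈ Q := by
      apply hsub
      rw [mem_ball, dist_eq_norm, add_sub_cancel_left, hv]
      linarith
    have := dist_le_diam_of_mem hbdd hc1 hc0
    rw [dist_eq_norm, add_sub_cancel_left, hv] at this
    linarith

/-- the enlarged cube -/
def star {n : ℕ} (Q : Set (Eucl n)) : Set (Eucl n) := {x | infDist x Q < diam Q / 2}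

lemma measurable_star {n : ℕ} (Q : Set (Eucl n)) : MeasurableSet (star Q) :=
  (isOpen_lt (continuous_infDist_pt Q) continuous_const).measurableSet

lemma star_facts {n : ℕ} (hn : 0 < n) {G : Set (Eucl n)} {W : Set (Set (Eucl n))}
    (hW : IsWhitneyDecomposition n G W) {Q : Set (Eucl n)} (hQ : Q ∈ W) {x : Eucl n}
    (hx : x ∈ star Q) :
    diam Q / 2 ≤ infDist x (frontier G) ∧ infDist x (frontier G) ≤ 6 * diam Q ∧
      ∀ z ∈ Q, dist z x < 2 * diam Q := by
  obtain ⟨-, hd, -, -, hdist⟩ := hW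
  obtain ⟨c, r, hr, hsub, hb, h1, h2⟩ := cube_facts n hn Q (hd Q hQ)
  have hne : Q.Nonempty := ⟨c, hsub (mem_ball_self hr)⟩
  obtain ⟨y, hy, hxy⟩ := (infDist_lt_iff hne).1 hx
  obtain ⟨hlow, x0, hx0, hup⟩ := hdist Q hQ
  have hz : ∀ z ∈ Q, dist z x < 2 * diam Q := by
    intro z hz
    have := dist_le_diam_of_mem hb hz hy
    have := dist_triangle z y x
    rw [dist_comm y x] at this
    linarith
  refine ⟨?_, ?_, hz⟩
  · have := infDist_le_infDist_add_dist (s := frontier G) (x := y) (y := x)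
    rw [dist_comm] at this
    linarith [hlow y hy]
  · have := infDist_le_infDist_add_dist (s := frontier G) (x := x) (y := x0)
    rw [dist_comm] at this
    linarith [hz x0 hx0]

open Classical in
lemma overlap {n : ℕ} (hn : 0 < n) {G : Set (Eucl n)} {W : Set (Set (Eucl n))}
    (hW : IsWhitneyDecomposition n G W) (x : Eucl n) :
    ∑' Q : W, (star (Q : Set (Eucl n))).indicator (fun _ => (1:ℝ≥0∞)) x
      ≤ ENNReal.ofReal ((48 * n : ℝ) ^ n) := by
  have hn0 : (0:ℝ) < n := by exact_mod_cast hn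
  by_cases hD : ∃ Q : W, x ∈ star (Q : Set (Eucl n))
  swap
  · push Not at hD
    have : ∀ Q : W, (star (Q : Set (Eucl n))).indicator (fun _ => (1:ℝ≥0∞)) x = 0 :=
      fun Q => indicator_of_notMem (hD Q) _
    simp [this]
  set D := infDist x (frontier G) with hDdef
  have hDpos : 0 < D := by
    obtain ⟨Q, hQ⟩ := hD
    obtain ⟨c, r, hr, hsub, hb, h1, h2⟩ := cube_facts n hn Q (hW.2.1 Q Q.2)
    have := (star_facts hn hW Q.2 hQ).1
    linarith
  have hvol : ∀ y : Eucl n, ∀ r : ℝ, 0 < r → volume (ball y r) =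
      ENNReal.ofReal (r ^ n) * volume (ball (0 : Eucl n) 1) := by
    intro y r hr
    rw [Measure.addHaar_ball_of_pos _ _ hr]; simp
  set v := volume (ball (0 : Eucl n) (D / (12 * n))) with hv
  have hv0 : v ≠ 0 := (measure_ball_pos _ _ (by positivity)).ne'
  have hvt : v ≠ ∞ := measure_ball_lt_top.ne
  set A : W → Set (Eucl n) := fun Q => if x ∈ star (Q : Set (Eucl n)) then interior Q else ∅ with hA
  have h1 : ∀ Q : W, (star (Q : Set (Eucl n))).indicator (fun _ => (1:ℝ≥0∞)) x * v
      ≤ volume (A Q) := by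
    intro Q
    by_cases hx : x ∈ star (Q : Set (Eucl n))
    · obtain ⟨c, r, hr, hsub, hb, h1, h2⟩ := cube_facts n hn Q (hW.2.1 Q Q.2)
      rw [indicator_of_mem hx, one_mul]
      simp only [hA, if_pos hx]
      calc v ≤ volume (ball (0 : Eucl n) r) := by
            apply measure_mono
            apply ball_subset_ball
            rw [div_le_iff₀ (by positivity)]
            have := (star_facts hn hW Q.2 hx).2.1
            nlinarith
        _ = volume (ball c r) := by rw [hvol _ _ hr, hvol c _ hr]
        _ ≤ _ := measure_mono (interior_maximal hsub isOpen_ball)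
    · rw [indicator_of_notMem hx]; simp
  have h2 : ∑' Q : W, volume (A Q) ≤ volume (⋃ Q, A Q) := by
    apply tsum_meas_le_meas_iUnion_of_disjoint
    · intro Q
      simp only [hA]
      split_ifs
      · exact isOpen_interior.measurableSet
      · exact MeasurableSet.empty
    · intro Q R hQR
      have := hW.2.2.2.1 Q.2 R.2 (fun h => hQR (Subtype.ext h))
      simp only [Function.onFun, hA]
      split_ifs <;> simp [disjoint_iff_inter_eq_empty, this]
  have h3 : (⋃ Q, A Q) ⊆ ball x (4 * D) := by
    apply iUnion_subset
    intro Q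
    simp only [hA]
    split_ifs with hx
    · intro z hz
      have h := star_facts hn hW Q.2 hx
      have := h.2.2 z (interior_subset hz)
      rw [mem_ball]
      linarith [h.1]
    · exact empty_subset _
  have h4 : volume (ball x (4 * D)) = ENNReal.ofReal ((48 * n : ℝ) ^ n) * v := by
    rw [hv, hvol x (4 * D) (by positivity), hvol 0 (D / (12 * n)) (by positivity), ← mul_assoc,
      ← ENNReal.ofReal_mul (by positivity), ← mul_pow]
    congr 3
    field_simp
    ring
  have h5 : (∑' Q : W, (star (Q : Set (Eucl n))).indicator (fun _ => (1:ℝ≥0∞)) x) * v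
      ≤ ENNReal.ofReal ((48 * n : ℝ) ^ n) * v := by
    rw [← ENNReal.tsum_mul_right, ← h4]
    exact (ENNReal.tsum_le_tsum h1).trans (h2.trans (measure_mono h3))
  exact (ENNReal.mul_le_mul_iff_left hv0 hvt).1 h5

lemma tsum_rpow_le {ι : Type*} (a : ι → ℝ≥0∞) {s : ℝ} (hs : 1 ≤ s) :
    ∑' i, a i ^ s ≤ (∑' i, a i) ^ s := by
  have key : ∀ t : ℝ≥0∞, t ^ s = t * t ^ (s - 1) := by
    intro t
    conv_lhs => rw [show s = 1 + (s - 1) by ring]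
    rw [ENNReal.rpow_add_of_nonneg _ _ zero_le_one (by linarith), ENNReal.rpow_one]
  rw [key, ← ENNReal.tsum_mul_right]
  apply ENNReal.tsum_le_tsum
  intro i
  rw [key]
  gcongr
  exact ENNReal.le_tsum i

lemma add_rpow_le {a b s : ℝ} (ha : 0 ≤ a) (hb : 0 ≤ b) (hs : 0 < s) :
    (a + b) ^ s ≤ 2 ^ s * (a ^ s + b ^ s) := by
  wlog h : a ≤ b generalizing a b
  · have := this hb ha (le_of_not_ge h)
    rwa [add_comm b, add_comm (b ^ s)] at this
  calc (a + b) ^ s ≤ (2 * b) ^ s := by gcongr; linarith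
    _ = 2 ^ s * b ^ s := by rw [Real.mul_rpow (by norm_num) hb]
    _ ≤ _ := by gcongr; linarith [Real.rpow_nonneg ha s]

lemma add_rpow_le' {a b : ℝ≥0∞} {s : ℝ} (hs : 0 < s) :
    (a + b) ^ s ≤ 2 ^ s * (a ^ s + b ^ s) := by
  wlog h : a ≤ b generalizing a b
  · have := this (le_of_not_ge h)
    rwa [add_comm b, add_comm (b ^ s)] at this
  calc (a + b) ^ s ≤ (2 * b) ^ s := by gcongr; rw [two_mul]; gcongr
    _ = 2 ^ s * b ^ s := by rw [ENNReal.mul_rpow_of_nonneg _ _ hs.le]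
    _ ≤ _ := by gcongr; exact le_add_self

/-- the cutoff function -/
noncomputable def cut {n : ℕ} (Q : Set (Eucl n)) (x : Eucl n) : ℝ := max 0 (1 - infDist x Q / (diam Q / 2))

lemma cut_cont {n : ℕ} (Q : Set (Eucl n)) : Continuous (cut Q) := by
  unfold cut
  have := continuous_infDist_pt Q
  fun_prop

lemma cut_on {n : ℕ} {Q : Set (Eucl n)} {x : Eucl n} (hx : x ∈ Q) : cut Q x = 1 := by
  simp [cut, infDist_zero_of_mem hx]

lemma cut_off {n : ℕ} {Q : Set (Eucl n)} (hd : 0 < diam Q) {x : Eucl n} (hx : x ∉ star Q) :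
    cut Q x = 0 := by
  have h : diam Q / 2 ≤ infDist x Q := not_lt.1 hx
  unfold cut
  rw [max_eq_left]
  have : 1 ≤ infDist x Q / (diam Q / 2) := (one_le_div (by linarith)).2 h
  linarith

lemma cut_bounds {n : ℕ} (Q : Set (Eucl n)) (x : Eucl n) : 0 ≤ cut Q x ∧ cut Q x ≤ 1 := by
  refine ⟨le_max_left _ _, max_le zero_le_one ?_⟩
  have : 0 ≤ infDist x Q / (diam Q / 2) :=
    div_nonneg infDist_nonneg (by linarith [diam_nonneg (s := Q)])
  linarith

lemma cut_lip {n : ℕ} {Q : Set (Eucl n)} (hd : 0 < diam Q) (x y : Eucl n) :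
    |cut Q x - cut Q y| ≤ min 1 (dist x y / (diam Q / 2)) := by
  apply le_min
  · have h1 := cut_bounds Q x
    have h2 := cut_bounds Q y
    rw [abs_le]; constructor <;> linarith [h1.1, h1.2, h2.1, h2.2]
  · unfold cut
    refine (abs_max_sub_max_le_max _ _ _ _).trans ?_
    rw [sub_self, abs_zero, max_eq_right (abs_nonneg _), sub_sub_sub_cancel_left, ← sub_div, abs_div,
      abs_of_pos (show 0 < diam Q / 2 by linarith)]
    apply div_le_div_of_nonneg_right _ (by linarith)
    rw [abs_le]
    have h1 := infDist_le_infDist_add_dist (s := Q) (x := x) (y := y)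
    have h2 := infDist_le_infDist_add_dist (s := Q) (x := y) (y := x)
    rw [dist_comm y x] at h2
    constructor <;> linarith

/-- kernel of the cutoff -/
noncomputable def Phi (n : ℕ) (δ p r : ℝ) (x y : Eucl n) : ℝ≥0∞ :=
  ENNReal.ofReal ((min 1 (dist x y / r)) ^ p / dist x y ^ ((n:ℝ) + δ * p))

lemma kernel_pt {n : ℕ} (δ p : ℝ) (hp : 0 < p) {Q : Set (Eucl n)} (hd : 0 < diam Q)
    (u : Eucl n → ℝ) (x y : Eucl n) :
    fracKernel n δ p (fun x => u x * cut Q x) x y ≤ ENNReal.ofReal (2 ^ p) *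
      ((star Q).indicator (fun _ => 1) x * fracKernel n δ p u x y +
        ((star Q).indicator (fun _ => 1) x * ENNReal.ofReal (|u x| ^ p) * Phi n δ p (diam Q / 2) x y +
        (star Q).indicator (fun _ => 1) y * ENNReal.ofReal (|u y| ^ p) *
          Phi n δ p (diam Q / 2) x y)) := by
  set m := min 1 (dist x y / (diam Q / 2)) with hm
  have hm0 : 0 ≤ m := by
    apply le_min zero_le_one
    have : 0 < diam Q / 2 := by linarith
    positivity
  have hlip := cut_lip hd x y
  rw [← hm] at hlip
  set b := dist x y ^ ((n:ℝ) + δ * p) with hb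
  have hb0 : 0 ≤ b := by positivity
  unfold fracKernel Phi
  rw [← hm, ← hb]
  by_cases hx : x ∈ star Q
  · rw [indicator_of_mem hx, one_mul, one_mul]
    have key : |u x * cut Q x - u y * cut Q y| ^ p / b
        ≤ 2 ^ p * (|u x - u y| ^ p / b + |u x| ^ p * (m ^ p / b)) := by
      have e : |u x * cut Q x - u y * cut Q y| ≤ |u x - u y| + |u x| * m := by
        have : u x * cut Q x - u y * cut Q y
          = (u x - u y) * cut Q y + u x * (cut Q x - cut Q y) := by ring
        rw [this]
        refine (abs_add_le _ _).trans ?_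
        rw [abs_mul, abs_mul]
        have h2 := cut_bounds Q y
        apply add_le_add
        · rw [abs_of_nonneg h2.1]
          exact mul_le_of_le_one_right (abs_nonneg _) h2.2
        · gcongr
      have e2 : |u x * cut Q x - u y * cut Q y| ^ p ≤ 2 ^ p * (|u x - u y| ^ p + |u x| ^ p * m ^ p) := by
        rw [← Real.mul_rpow (abs_nonneg _) hm0]
        exact (Real.rpow_le_rpow (abs_nonneg _) e hp.le).trans
          (add_rpow_le (abs_nonneg _) (by positivity) hp)
      calc _ ≤ (2 ^ p * (|u x - u y| ^ p + |u x| ^ p * m ^ p)) / b := by gcongr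
        _ = _ := by ring
    refine (ENNReal.ofReal_le_ofReal key).trans ?_
    rw [ENNReal.ofReal_mul (by positivity), ENNReal.ofReal_add (by positivity) (by positivity),
      ENNReal.ofReal_mul (by positivity)]
    gcongr
    exact le_self_add
  · have hx0 := cut_off hd hx
    by_cases hy : y ∈ star Q
    · rw [indicator_of_mem hy, one_mul, indicator_of_notMem hx]
      have key : |u x * cut Q x - u y * cut Q y| ^ p / b ≤ 2 ^ p * (|u y| ^ p * (m ^ p / b)) := by
        have e : |u x * cut Q x - u y * cut Q y| ≤ |u y| * m := by
          have : u x * cut Q x - u y * cut Q y = u y * (cut Q x - cut Q y) := by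
            rw [hx0]; ring
          rw [this, abs_mul]
          gcongr
        have e2 : |u x * cut Q x - u y * cut Q y| ^ p ≤ |u y| ^ p * m ^ p := by
          rw [← Real.mul_rpow (abs_nonneg _) hm0]
          exact Real.rpow_le_rpow (abs_nonneg _) e hp.le
        have h2 : (1:ℝ) ≤ 2 ^ p := Real.one_le_rpow (by norm_num) hp.le
        calc _ ≤ (|u y| ^ p * m ^ p) / b := by gcongr
          _ = 1 * (|u y| ^ p * (m ^ p / b)) := by ring
          _ ≤ _ := by gcongr
      refine (ENNReal.ofReal_le_ofReal key).trans ?_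
      rw [ENNReal.ofReal_mul (by positivity), ENNReal.ofReal_mul (by positivity)]
      simp
    · have hy0 := cut_off hd hy
      simp [hx0, hy0, Real.zero_rpow hp.ne']

lemma meas_kernel {n : ℕ} (δ p : ℝ) {u : Eucl n → ℝ} (hu : Continuous u) :
    Measurable (fun z : Eucl n × Eucl n => fracKernel n δ p u z.1 z.2) := by
  unfold fracKernel
  have := hu.measurable
  fun_prop

lemma meas_Phi {n : ℕ} (δ p r : ℝ) :
    Measurable (fun z : Eucl n × Eucl n => Phi n δ p r z.1 z.2) := by
  unfold Phi
  fun_prop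

lemma dbl_bound {n : ℕ} (G : Set (Eucl n)) (k P F : Eucl n → Eucl n → ℝ≥0∞) (i w : Eucl n → ℝ≥0∞)
    (c D : ℝ≥0∞) (hc : c ≠ ∞)
    (hk : Measurable (fun z : Eucl n × Eucl n => k z.1 z.2))
    (hP : Measurable (fun z : Eucl n × Eucl n => P z.1 z.2))
    (hi : Measurable i) (hw : Measurable w) (hsymm : ∀ x y, P x y = P y x)
    (hD : ∀ x, ∫⁻ y, P x y ≤ D)
    (hF : ∀ x y, F x y ≤ c * (i x * k x y + (w x * P x y + w y * P x y))) :
    ∫⁻ x in G, ∫⁻ y in G, F x y ≤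
      c * ((∫⁻ x in G, i x * ∫⁻ y in G, k x y) + 2 * (D * ∫⁻ x in G, w x)) := by
  have m1 : Measurable (fun z : Eucl n × Eucl n => i z.1 * k z.1 z.2) :=
    (hi.comp measurable_fst).mul hk
  have m2 : Measurable (fun z : Eucl n × Eucl n => w z.1 * P z.1 z.2) :=
    (hw.comp measurable_fst).mul hP
  have m3 : Measurable (fun z : Eucl n × Eucl n => w z.2 * P z.1 z.2) :=
    (hw.comp measurable_snd).mul hP
  have k1 : ∀ x, Measurable (fun y => k x y) := fun x => hk.comp measurable_prodMk_left
  have k2 : ∀ x, Measurable (fun y => P x y) := fun x => hP.comp measurable_prodMk_left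
  have k3 : ∀ x, Measurable (fun y => i x * k x y) := fun x => (k1 x).const_mul _
  have k4 : ∀ x, Measurable (fun y => w x * P x y) := fun x => (k2 x).const_mul _
  have n1 : Measurable (fun x => ∫⁻ y in G, i x * k x y) := m1.lintegral_prod_right'
  have n2 : Measurable (fun x => ∫⁻ y in G, w x * P x y) := m2.lintegral_prod_right'
  have hB : ∫⁻ x in G, ∫⁻ y in G, w x * P x y ≤ D * ∫⁻ x in G, w x := by
    rw [← lintegral_const_mul _ hw]
    apply lintegral_mono
    intro x
    simp only
    rw [lintegral_const_mul _ (k2 x), mul_comm]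
    gcongr
    exact (setLIntegral_le_lintegral _ _).trans (hD x)
  have hB' : ∫⁻ x in G, ∫⁻ y in G, w y * P x y = ∫⁻ x in G, ∫⁻ y in G, w x * P x y := by
    rw [lintegral_lintegral_swap (f := fun x y => w y * P x y) m3.aemeasurable]
    apply lintegral_congr
    intro x
    apply lintegral_congr
    intro y
    rw [hsymm]
  calc ∫⁻ x in G, ∫⁻ y in G, F x y
      ≤ ∫⁻ x in G, ∫⁻ y in G, c * (i x * k x y + (w x * P x y + w y * P x y)) :=
        lintegral_mono fun x => lintegral_mono fun y => hF x y
    _ = c * ((∫⁻ x in G, ∫⁻ y in G, i x * k x y) +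
          ((∫⁻ x in G, ∫⁻ y in G, w x * P x y) + ∫⁻ x in G, ∫⁻ y in G, w y * P x y)) := by
        rw [← lintegral_add_left n2, ← lintegral_add_left n1, ← lintegral_const_mul' _ _ hc]
        apply lintegral_congr
        intro x
        rw [lintegral_const_mul' _ _ hc, lintegral_add_left (k3 x), lintegral_add_left (k4 x)]
    _ ≤ _ := by
        rw [hB', ← two_mul]
        gcongr with x
        exact (lintegral_const_mul _ (k1 x)).le

lemma energy_cut {n : ℕ} (δ p : ℝ) (hp : 0 < p) (C0 : ℝ)
    (hC0 : ∀ r : ℝ, 0 < r → ∀ x : Eucl n,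
      ∫⁻ y : Eucl n, Phi n δ p r x y ≤ ENNReal.ofReal (C0 * r ^ (-(δ * p))))
    {Q : Set (Eucl n)} (hd : 0 < diam Q) (G : Set (Eucl n))
    {u : Eucl n → ℝ} (hu : Continuous u) :
    fracEnergy n δ p G (fun x => u x * cut Q x) ≤ ENNReal.ofReal (2 ^ p) *
      ((∫⁻ x in G, (star Q).indicator (fun _ => 1) x * ∫⁻ y in G, fracKernel n δ p u x y) +
        2 * (ENNReal.ofReal (C0 * (diam Q / 2) ^ (-(δ * p))) *
          ∫⁻ x in G, (star Q).indicator (fun _ => 1) x * ENNReal.ofReal (|u x| ^ p))) := by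
  have hi : Measurable ((star Q).indicator (fun _ => (1:ℝ≥0∞))) :=
    measurable_const.indicator (measurable_star Q)
  have hw : Measurable (fun x => (star Q).indicator (fun _ => (1:ℝ≥0∞)) x *
      ENNReal.ofReal (|u x| ^ p)) := by
    have := hu.measurable
    exact hi.mul (by fun_prop)
  exact dbl_bound G (fracKernel n δ p u) (Phi n δ p (diam Q / 2)) _ _ _ _ _ ENNReal.ofReal_ne_top
    (meas_kernel δ p hu) (meas_Phi δ p _) hi hw
    (fun x y => by unfold Phi; rw [dist_comm]) (hC0 _ (by linarith))
    (fun x y => kernel_pt δ p hp hd u x y)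

lemma real_est (n : ℕ) {δ p q C0 V d D : ℝ} (hp : 0 < p) (hq : 0 < q) (hC0 : 0 < C0) (hV : 0 < V)
    (hd : 0 < d) (h1 : d / 2 ≤ D) (h2 : D ≤ 6 * d) :
    (C0 * (d / 2) ^ (-(δ * p))) ^ (q / p) * ((2 * d) ^ n * V) ^ (q / p - 1) ≤
      (C0 * (1 / 2) ^ (-(δ * p))) ^ (q / p) * (2 ^ n * V) ^ (q / p - 1) *
        6 ^ |q * (δ + n * (1/q - 1/p))| * (1 / D ^ (q * (δ + n * (1/q - 1/p)))) := by
  set β := q * (δ + n * (1/q - 1/p)) with hβ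
  have hD : 0 < D := by linarith
  have hβ' : -β = -(δ * p) * (q / p) + n * (q / p - 1) := by
    rw [hβ]; field_simp; ring
  have e : (C0 * (d / 2) ^ (-(δ * p))) ^ (q / p) * ((2 * d) ^ n * V) ^ (q / p - 1)
      = (C0 * (1 / 2) ^ (-(δ * p))) ^ (q / p) * (2 ^ n * V) ^ (q / p - 1) * d ^ (-β) := by
    rw [hβ', Real.rpow_add hd, Real.rpow_mul hd.le, Real.rpow_mul hd.le, Real.rpow_natCast,
      show d / 2 = (1/2) * d by ring, Real.mul_rpow (by norm_num) hd.le, mul_pow,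
      ← mul_assoc, Real.mul_rpow (by positivity) (by positivity),
      show (2:ℝ) ^ n * d ^ n * V = 2 ^ n * V * d ^ n by ring,
      Real.mul_rpow (x := 2 ^ n * V) (by positivity) (by positivity)]
    ring
  rw [e, mul_assoc _ (6 ^ |β|)]
  gcongr
  rw [mul_one_div, le_div_iff₀ (by positivity), Real.rpow_neg hd.le, ← div_eq_inv_mul,
    ← Real.div_rpow hD.le hd.le]
  rcases le_total 0 β with hb | hb
  · rw [abs_of_nonneg hb]
    apply Real.rpow_le_rpow (by positivity) _ hb
    rw [div_le_iff₀ hd]; linarith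
  · rw [abs_of_nonpos hb, ← inv_div, Real.inv_rpow (by positivity), ← Real.rpow_neg (by positivity)]
    apply Real.rpow_le_rpow (by positivity) _ (by linarith)
    rw [div_le_iff₀ hD]; linarith

lemma holder {n : ℕ} {p q : ℝ} (hp : 0 < p) (hpq : p ≤ q) (μ : Measure (Eucl n))
    {u : Eucl n → ℝ} (hu : Continuous u) :
    (∫⁻ x, ENNReal.ofReal (|u x| ^ p) ∂μ) ^ (q / p) ≤
      (∫⁻ x, ENNReal.ofReal (|u x| ^ q) ∂μ) * μ univ ^ (q / p - 1) := by
  have hq : 0 < q := hp.trans_le hpq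
  have h := eLpNorm'_le_eLpNorm'_mul_rpow_measure_univ (μ := μ) (f := u) hp hpq
    hu.measurable.aestronglyMeasurable
  have hconv : ∀ s : ℝ, 0 < s → ∀ x, ENNReal.ofReal (|u x| ^ s) = ‖u x‖ₑ ^ s := by
    intro s hs x
    rw [← ENNReal.ofReal_rpow_of_nonneg (abs_nonneg _) hs.le, Real.enorm_eq_ofReal_abs]
  simp_rw [hconv p hp, hconv q hq]
  have h' := ENNReal.rpow_le_rpow h hq.le
  rw [ENNReal.mul_rpow_of_nonneg _ _ hq.le, ← ENNReal.rpow_mul, eLpNorm', eLpNorm',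
    ← ENNReal.rpow_mul, ← ENNReal.rpow_mul] at h'
  have a1 : 1 / p * q = q / p := by ring
  have a2 : 1 / q * q = 1 := by field_simp
  have a3 : (1 / p - 1 / q) * q = q / p - 1 := by field_simp
  rwa [a1, a2, a3, ENNReal.rpow_one] at h'

lemma local_term {n : ℕ} (hn : 0 < n) {δ p q C0 V : ℝ} (hp : 0 < p) (hpq : p ≤ q) (hC0 : 0 < C0)
    (hV : 0 < V) (hVv : volume (ball (0 : Eucl n) 1) = ENNReal.ofReal V)
    {G : Set (Eucl n)} {W : Set (Set (Eucl n))}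
    (hW : IsWhitneyDecomposition n G W) {Q : Set (Eucl n)} (hQ : Q ∈ W)
    {u : Eucl n → ℝ} (hu : Continuous u) :
    (ENNReal.ofReal (C0 * (diam Q / 2) ^ (-(δ * p))) *
          ∫⁻ x in G, (star Q).indicator (fun _ => 1) x * ENNReal.ofReal (|u x| ^ p)) ^ (q / p) ≤
      ENNReal.ofReal ((C0 * (1 / 2) ^ (-(δ * p))) ^ (q / p) * (2 ^ n * V) ^ (q / p - 1) *
        6 ^ |q * (δ + n * (1/q - 1/p))|) *
      ∫⁻ x in G, (star Q).indicator (fun _ => 1) x * ENNReal.ofReal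
        (|u x| ^ q / infDist x (frontier G) ^ (q * (δ + n * (1/q - 1/p)))) := by
  have hq : 0 < q := hp.trans_le hpq
  have hs0 : 0 ≤ q / p := by positivity
  have hs1 : 0 ≤ q / p - 1 := by
    have : 1 ≤ q / p := (one_le_div hp).2 hpq
    linarith
  obtain ⟨c, r, hr, hsub, hb, -, hd⟩ := cube_facts n hn Q (hW.2.1 Q hQ)
  have hcQ : c ∈ Q := hsub (mem_ball_self hr)
  set d := diam Q with hd'
  have hind : ∀ f : Eucl n → ℝ≥0∞,
      ∫⁻ x in G, (star Q).indicator (fun _ => 1) x * f x = ∫⁻ x in star Q, f x ∂(volume.restrict G) := by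
    intro f
    rw [← lintegral_indicator (measurable_star Q)]
    apply lintegral_congr
    intro x
    by_cases hx : x ∈ star Q <;> simp [hx]
  rw [hind, hind]
  set μ := (volume.restrict G).restrict (star Q) with hμ
  have hvol : μ univ ≤ ENNReal.ofReal ((2 * d) ^ n * V) := by
    rw [hμ, Measure.restrict_apply_univ]
    refine (Measure.restrict_apply_le _ _).trans ?_
    calc volume (star Q) ≤ volume (ball c (2 * d)) := by
          apply measure_mono
          intro x hx
          rw [mem_ball, dist_comm]
          exact (star_facts hn hW hQ hx).2.2 c hcQ
      _ = _ := by
          rw [Measure.addHaar_ball_of_pos _ _ (by positivity), hVv,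
            ENNReal.ofReal_mul (by positivity)]
          simp
  rw [ENNReal.mul_rpow_of_nonneg _ _ hs0, ENNReal.ofReal_rpow_of_nonneg (by positivity) hs0]
  have hm : Measurable fun x => ENNReal.ofReal (|u x| ^ q) := by
    have := hu.measurable
    fun_prop
  calc _ ≤ ENNReal.ofReal ((C0 * (d / 2) ^ (-(δ * p))) ^ (q / p)) *
        ((∫⁻ x, ENNReal.ofReal (|u x| ^ q) ∂μ) * ENNReal.ofReal ((2 * d) ^ n * V) ^ (q / p - 1)) := by
        gcongr
        exact (holder hp hpq μ hu).trans (by gcongr)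
    _ = ENNReal.ofReal ((C0 * (d / 2) ^ (-(δ * p))) ^ (q / p) * ((2 * d) ^ n * V) ^ (q / p - 1)) *
        (∫⁻ x, ENNReal.ofReal (|u x| ^ q) ∂μ) := by
        rw [ENNReal.ofReal_rpow_of_nonneg (by positivity) hs1, ENNReal.ofReal_mul (by positivity)]
        ring
    _ ≤ _ := by
        rw [← lintegral_const_mul' _ _ ENNReal.ofReal_ne_top,
          ← lintegral_const_mul' _ _ ENNReal.ofReal_ne_top]
        apply setLIntegral_mono' (measurable_star Q)
        intro x hx
        obtain ⟨f1, f2, -⟩ := star_facts hn hW hQ hx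
        have hR := real_est n (δ := δ) hp hq hC0 hV hd f1 f2
        rw [← ENNReal.ofReal_mul (by positivity), ← ENNReal.ofReal_mul (by positivity)]
        apply ENNReal.ofReal_le_ofReal
        have h0 : 0 ≤ |u x| ^ q := by positivity
        refine (mul_le_mul_of_nonneg_right hR h0).trans (le_of_eq ?_)
        ring

lemma sum_star {n : ℕ} (hn : 0 < n) {G : Set (Eucl n)} {W : Set (Set (Eucl n))}
    (hW : IsWhitneyDecomposition n G W) {f : Eucl n → ℝ≥0∞} (hf : Measurable f) :
    ∑' Q : W, ∫⁻ x in G, (star (Q : Set (Eucl n))).indicator (fun _ => 1) x * f x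
      ≤ ENNReal.ofReal ((48 * n : ℝ) ^ n) * ∫⁻ x in G, f x := by
  have : Countable W := hW.1.to_subtype
  rw [← lintegral_tsum, ← lintegral_const_mul _ hf]
  · apply lintegral_mono
    intro x
    simp only
    rw [ENNReal.tsum_mul_right]
    gcongr
    exact overlap hn hW x
  · intro Q
    exact ((measurable_const.indicator (measurable_star _)).mul hf).aemeasurable

lemma main_u {n : ℕ} (hn : 0 < n) {δ p q C0 V C₁ : ℝ} (hp : 0 < p) (hpq : p ≤ q) (hC0 : 0 < C0)
    (hC : ∀ r : ℝ, 0 < r → ∀ x : Eucl n,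
      ∫⁻ y : Eucl n, Phi n δ p r x y ≤ ENNReal.ofReal (C0 * r ^ (-(δ * p))))
    (hV : 0 < V) (hVv : volume (ball (0 : Eucl n) 1) = ENNReal.ofReal V)
    {G : Set (Eucl n)} {W : Set (Set (Eucl n))}
    (hW : IsWhitneyDecomposition n G W) (hH : HasFracHardy n δ p q C₁ G) (K : Set (Eucl n))
    {u : Eucl n → ℝ} (hu : Continuous u) (hsupp : HasCompactSupport u) (hG : tsupport u ⊆ G)
    (h1 : ∀ x ∈ K, 1 ≤ u x) :
    (∑' Q : W, fracCap n δ p (K ∩ (Q : Set (Eucl n))) G ^ (q / p)) ≤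
      (ENNReal.ofReal (2 ^ p) ^ (q / p) * (2 ^ (q / p) *
        (ENNReal.ofReal ((48 * n : ℝ) ^ n) ^ (q / p) + 2 ^ (q / p) *
          (ENNReal.ofReal ((C0 * (1 / 2) ^ (-(δ * p))) ^ (q / p) * (2 ^ n * V) ^ (q / p - 1) *
            6 ^ |q * (δ + n * (1/q - 1/p))|) * (ENNReal.ofReal ((48 * n : ℝ) ^ n) *
              ENNReal.ofReal C₁))))) * fracEnergy n δ p G u ^ (q / p) := by
  have hq : 0 < q := hp.trans_le hpq
  have hs1 : 1 ≤ q / p := (one_le_div hp).2 hpq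
  have hs0 : 0 < q / p := by positivity
  set s := q / p with hs
  set M := ENNReal.ofReal ((48 * n : ℝ) ^ n) with hM
  set C3 := ENNReal.ofReal ((C0 * (1 / 2) ^ (-(δ * p))) ^ s * (2 ^ n * V) ^ (s - 1) *
            6 ^ |q * (δ + n * (1/q - 1/p))|) with hC3
  set A : W → ℝ≥0∞ := fun Q => ∫⁻ x in G, (star (Q : Set (Eucl n))).indicator (fun _ => 1) x *
    ∫⁻ y in G, fracKernel n δ p u x y with hA
  set H : W → ℝ≥0∞ := fun Q => ∫⁻ x in G, (star (Q : Set (Eucl n))).indicator (fun _ => 1) x *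
    ENNReal.ofReal (|u x| ^ q / infDist x (frontier G) ^ (q * (δ + n * (1/q - 1/p)))) with hHdef
  have hterm : ∀ Q : W, fracCap n δ p (K ∩ (Q : Set (Eucl n))) G ^ s ≤
      ENNReal.ofReal (2 ^ p) ^ s * (2 ^ s * (A Q ^ s + 2 ^ s * (C3 * H Q))) := by
    intro Q
    obtain ⟨c, r, hr, hsub, hb, -, hd⟩ := cube_facts n hn Q (hW.2.1 Q Q.2)
    have hcap : fracCap n δ p (K ∩ (Q : Set (Eucl n))) G ≤
        fracEnergy n δ p G (fun x => u x * cut (Q : Set (Eucl n)) x) := by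
      refine iInf_le_of_le (fun x => u x * cut (Q : Set (Eucl n)) x) ?_
      refine iInf_le_of_le (hu.mul (cut_cont _)) ?_
      refine iInf_le_of_le (hsupp.mul_right) ?_
      refine iInf_le_of_le ((tsupport_mul_subset_left).trans hG) ?_
      refine iInf_le_of_le ?_ le_rfl
      rintro x ⟨hxK, hxQ⟩
      change 1 ≤ u x * cut (Q : Set (Eucl n)) x
      rw [cut_on hxQ, mul_one]
      exact h1 x hxK
    have hE := hcap.trans (energy_cut δ p hp C0 hC hd G hu)
    refine (ENNReal.rpow_le_rpow hE hs0.le).trans ?_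
    rw [ENNReal.mul_rpow_of_nonneg _ _ hs0.le]
    gcongr
    refine (add_rpow_le' hs0).trans ?_
    rw [ENNReal.mul_rpow_of_nonneg 2 _ hs0.le]
    gcongr
    exact local_term hn hp hpq hC0 hV hVv hW Q.2 hu
  refine (ENNReal.tsum_le_tsum hterm).trans ?_
  rw [ENNReal.tsum_mul_left, ENNReal.tsum_mul_left, ENNReal.tsum_add, ENNReal.tsum_mul_left,
    ENNReal.tsum_mul_left]
  have hAs : ∑' Q, A Q ^ s ≤ M ^ s * fracEnergy n δ p G u ^ s := by
    refine (tsum_rpow_le A hs1).trans ?_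
    rw [← ENNReal.mul_rpow_of_nonneg _ _ hs0.le]
    gcongr
    exact sum_star hn hW (meas_kernel δ p hu).lintegral_prod_right'
  have hHs : ∑' Q, H Q ≤ M * (ENNReal.ofReal C₁ * fracEnergy n δ p G u ^ s) := by
    refine (sum_star hn hW ?_).trans ?_
    · have := hu.measurable
      have h2 : Measurable fun x : Eucl n => infDist x (frontier G) :=
        (continuous_infDist_pt _).measurable
      fun_prop
    · gcongr
      exact hH u hu hsupp hG
  calc _ ≤ ENNReal.ofReal (2 ^ p) ^ s * (2 ^ s * (M ^ s * fracEnergy n δ p G u ^ s +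
          2 ^ s * (C3 * (M * (ENNReal.ofReal C₁ * fracEnergy n δ p G u ^ s))))) := by gcongr
    _ = _ := by ring

end FH

/-- If the fractional `(δ,q,p)`-Hardy inequality holds in a proper open
set `G ⊆ ℝⁿ` with constant `C₁ > 0` (`0 < δ < 1`, `0 < p ≤ q < ∞`), then there is a
constant `N = N(C₁,n,δ,q,p) > 0` such that for any Whitney decomposition `W` of `G`,
`∑_{Q ∈ W} cap_{δ,p}(K ∩ Q, G)^{q/p} ≤ N^{q/p} cap_{δ,p}(K, G)^{q/p}`
for every compact `K ⊆ G`. -/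
theorem statement12 (δ p q : ℝ) (hδ : δ ∈ Ioo (0:ℝ) 1) (hp : 0 < p) (hpq : p ≤ q)
    (C₁ : ℝ) (hC₁ : 0 < C₁) (n : ℕ) :
    ∃ N : ℝ, 0 < N ∧
      ∀ G : Set (Eucl n), IsOpen G → G.Nonempty → G ≠ univ →
        HasFracHardy n δ p q C₁ G →
        ∀ W : Set (Set (Eucl n)), IsWhitneyDecomposition n G W →
          ∀ K : Set (Eucl n), IsCompact K → K ⊆ G →
            (∑' Q : W, fracCap n δ p (K ∩ (Q : Set (Eucl n))) G ^ (q / p))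
              ≤ ENNReal.ofReal (N ^ (q / p)) * fracCap n δ p K G ^ (q / p) := by
  rcases Nat.eq_zero_or_pos n with rfl | hn
  · refine ⟨1, one_pos, ?_⟩
    intro G _ hne hG
    exact absurd (Subsingleton.eq_univ_of_nonempty hne) hG
  have hq : 0 < q := hp.trans_le hpq
  have hs0 : 0 < q / p := by positivity
  obtain ⟨C0, hC0, hC⟩ := FH.kernel_const n hn δ p hδ hp
  set V := (volume (ball (0 : Eucl n) 1)).toReal with hVdef
  have hVt : volume (ball (0 : Eucl n) 1) ≠ ∞ := measure_ball_lt_top.ne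
  have hVv : volume (ball (0 : Eucl n) 1) = ENNReal.ofReal V := (ENNReal.ofReal_toReal hVt).symm
  have hV : 0 < V := ENNReal.toReal_pos (measure_ball_pos _ _ one_pos).ne' hVt
  set T : ℝ≥0∞ := (ENNReal.ofReal (2 ^ p) ^ (q / p) * (2 ^ (q / p) *
        (ENNReal.ofReal ((48 * n : ℝ) ^ n) ^ (q / p) + 2 ^ (q / p) *
          (ENNReal.ofReal ((C0 * (1 / 2) ^ (-(δ * p))) ^ (q / p) * (2 ^ n * V) ^ (q / p - 1) *
            6 ^ |q * (δ + n * (1/q - 1/p))|) * (ENNReal.ofReal ((48 * n : ℝ) ^ n) *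
              ENNReal.ofReal C₁))))) with hT
  have hTt : T ≠ ∞ := by
    have h2 : (2:ℝ≥0∞) ^ (q / p) ≠ ∞ := ENNReal.rpow_ne_top_of_nonneg hs0.le (by simp)
    have h3 : ∀ a : ℝ, ENNReal.ofReal a ^ (q / p) ≠ ∞ :=
      fun a => ENNReal.rpow_ne_top_of_nonneg hs0.le ENNReal.ofReal_ne_top
    have h4 : ∀ a : ℝ, ENNReal.ofReal a ≠ ∞ := fun a => ENNReal.ofReal_ne_top
    rw [hT]
    exact ENNReal.mul_ne_top (h3 _) (ENNReal.mul_ne_top h2 (ENNReal.add_ne_top.2 ⟨h3 _,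
      ENNReal.mul_ne_top h2 (ENNReal.mul_ne_top (h4 _) (ENNReal.mul_ne_top (h4 _) (h4 _)))⟩))
  have hT0 : 0 < T.toReal + 1 := by positivity
  refine ⟨(T.toReal + 1) ^ (q / p)⁻¹, by positivity, ?_⟩
  intro G _ _ _ hH W hW K _ _
  rw [Real.rpow_inv_rpow hT0.le hs0.ne']
  set c := ENNReal.ofReal (T.toReal + 1) with hc
  have hc0 : c ≠ 0 := by rw [hc]; simpa using hT0
  have hct : c ≠ ∞ := ENNReal.ofReal_ne_top
  have hTc : T ≤ c := by
    rw [hc]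
    conv_lhs => rw [← ENNReal.ofReal_toReal hTt]
    exact ENNReal.ofReal_le_ofReal (by linarith)
  set L := ∑' Q : W, fracCap n δ p (K ∩ (Q : Set (Eucl n))) G ^ (q / p) with hL
  have hinf : (L / c) ^ (q / p)⁻¹ ≤ fracCap n δ p K G := by
    refine le_iInf fun u => le_iInf fun hu => le_iInf fun hsupp => le_iInf fun hG =>
      le_iInf fun h1 => ?_
    rw [ENNReal.rpow_inv_le_iff hs0]
    apply ENNReal.div_le_of_le_mul'
    exact (FH.main_u hn hp hpq hC0 hC hV hVv hW hH K hu hsupp hG h1).trans (by gcongr)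
  rw [ENNReal.rpow_inv_le_iff hs0] at hinf
  rwa [ENNReal.div_le_iff' hc0 hct] at hinf
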